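/- Let f : Q0 = [0,1]^n → [0,∞) be integrable. Then for every t ∈ (0,1], (1/t)∫_0^t |f^*(u) − f^{**}(t)| du ≤ 2^n · v(f; σ_t) · f^{**}(t), where σ_t = min(2 t^{1/n}, 1). -/

import Mathlib

open MeasureTheory Set Real

noncomputable section

/-- The unit cube `Q₀ = [0,1]ⁿ` in `ℝⁿ`. -/
def Q0 (n : ℕ) : Set (Fin n → ℝ) := Set.Icc 0 1

/-- The integral average `f_Q = (1/|Q|) ∫_Q f` of `f` over `Q`. -/
def avgOn {n : ℕ} (f : (Fin n → ℝ) → ℝ) (Q : Set (Fin n → ℝ)) : ℝ :=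
  (volume Q).toReal⁻¹ * ∫ x in Q, f x

/-- The mean oscillation `Ω(f,Q) = (1/|Q|) ∫_Q |f - f_Q|` of `f` over `Q`. -/
def oscOn {n : ℕ} (f : (Fin n → ℝ) → ℝ) (Q : Set (Fin n → ℝ)) : ℝ :=
  (volume Q).toReal⁻¹ * ∫ x in Q, |f x - avgOn f Q|

/-- `Q` is a dyadic subcube of `[0,1]ⁿ` of side length `2⁻ᵏ`,
i.e. `Q = ∏ᵢ [mᵢ 2⁻ᵏ, (mᵢ+1) 2⁻ᵏ]` with `0 ≤ mᵢ < 2ᵏ`. -/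
def IsDyadicSide (n k : ℕ) (Q : Set (Fin n → ℝ)) : Prop :=
  ∃ m : Fin n → ℕ, (∀ i, m i < 2 ^ k) ∧
    Q = Set.Icc (fun i => (m i : ℝ) / 2 ^ k) (fun i => ((m i : ℝ) + 1) / 2 ^ k)

/-- `Q` belongs to the family `𝒟` of dyadic subcubes of `[0,1]ⁿ`. -/
def IsDyadic (n : ℕ) (Q : Set (Fin n → ℝ)) : Prop := ∃ k, IsDyadicSide n k Q

/-- One-dimensional integral average `g_J` over a set `J ⊆ ℝ`. -/
def avgI (g : ℝ → ℝ) (J : Set ℝ) : ℝ := (volume J).toReal⁻¹ * ∫ u in J, g u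

/-- One-dimensional mean oscillation `Ω(g,J)` over a set `J ⊆ ℝ`. -/
def oscI (g : ℝ → ℝ) (J : Set ℝ) : ℝ :=
  (volume J).toReal⁻¹ * ∫ u in J, |g u - avgI g J|

/-- `g : (0,1] → ℝ` is the nonincreasing, left-continuous rearrangement of
`f : [0,1]ⁿ → ℝ`, i.e. it is nonincreasing, left continuous and equimeasurable with `f`. -/
def IsRearrangement {n : ℕ} (f : (Fin n → ℝ) → ℝ) (g : ℝ → ℝ) : Prop :=
  AntitoneOn g (Set.Ioc 0 1) ∧
  (∀ t ∈ Set.Ioc (0:ℝ) 1, ContinuousWithinAt g (Set.Iio t) t) ∧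
  ∀ lam : ℝ, volume {t ∈ Set.Ioc (0:ℝ) 1 | lam < g t} = volume {x ∈ Q0 n | lam < f x}

/-- The Hardy average `F(t) = (1/t) ∫_0^t g(u) du`. -/
def hardyAvg (g : ℝ → ℝ) (t : ℝ) : ℝ := t⁻¹ * ∫ u in Set.Ioc (0:ℝ) t, g u

/-- The Gurov–Reshetnyak modulus
`v(f;σ) = sup { Ω(f,Q)/f_Q : Q ∈ 𝒟, ℓ(Q) ≤ σ, f_Q > 0 }` (equal to `0` if no such `Q` exists,
by the convention `sSup ∅ = 0` in `ℝ`). -/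
def vGR {n : ℕ} (f : (Fin n → ℝ) → ℝ) (σ : ℝ) : ℝ :=
  sSup {r : ℝ | ∃ k Q, IsDyadicSide n k Q ∧ ((2:ℝ) ^ k)⁻¹ ≤ σ ∧
    0 < avgOn f Q ∧ r = oscOn f Q / avgOn f Q}

/-- `f` satisfies the dyadic Gurov–Reshetnyak condition `f ∈ GR_𝒟(Q₀,ε)`:
`f : Q₀ → [0,∞)` is integrable and `Ω(f,Q) ≤ ε f_Q` for every dyadic cube `Q`. -/
def GRcond {n : ℕ} (f : (Fin n → ℝ) → ℝ) (ε : ℝ) : Prop :=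
  IntegrableOn f (Q0 n) ∧ (∀ x ∈ Q0 n, 0 ≤ f x) ∧
    ∀ Q, IsDyadic n Q → oscOn f Q ≤ ε * avgOn f Q

/-!
Write `α = f**(t)` and `Ω` for mean oscillation. Since `Ω(g, J)` is twice the average over `J` of
`(g - g_J)⁺`, it suffices to bound `∫ (f* - α)⁺`, which by equimeasurability equals `∫ (f - α)⁺`
over the unit cube. Stop the dyadic subdivision of the cube at the first cubes `P` having a child
`C` with `f_C > α`. Three facts about the stopping cubes give the bound.

* `f_P ≤ α`, since otherwise the parent of `P` would have been selected; hence
  `2 ∫_P (f - α)⁺ ≤ |P| Ω(f, P) ≤ |P| v α`, where `v` is the Gurov–Reshetnyak modulus.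
* The union of the children `C` carries an average of `f` above `α`, so by the Hardy–Littlewood
  inequality its measure is at most `t`; hence `∑ |P| ≤ 2ⁿ t`. In particular each `P` has side
  length at most `2 t^{1/n}`.
* Off the stopping cubes `f ≤ α` almost everywhere, by Lebesgue differentiation.
-/

open scoped Topology
open Filter ProbabilityTheory

section MeanOscillation

variable {X : Type*} [MeasurableSpace X] {μ : Measure X} {f : X → ℝ}

lemma average_nonneg_of_ae (hf0 : 0 ≤ᵐ[μ] f) : 0 ≤ ⨍ x, f x ∂μ := by
  rw [average_eq]
  exact smul_nonneg (by positivity) (integral_nonneg_of_ae hf0)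

lemma average_mono_of_integrable {g : X → ℝ} (hf : Integrable f μ) (hg : Integrable g μ)
    (hfg : f ≤ᵐ[μ] g) : ⨍ x, f x ∂μ ≤ ⨍ x, g x ∂μ := by
  rw [average_eq, average_eq]
  exact smul_le_smul_of_nonneg_left (integral_mono_ae hf hg hfg) (by positivity)

variable [IsFiniteMeasure μ]

lemma integrable_posPart_sub_const (hf : Integrable f μ) (s : ℝ) :
    Integrable (fun x => (f x - s)⁺) μ :=
  (hf.sub (integrable_const s)).pos_part

lemma integral_sub_const_eq_mul_average_sub (hf : Integrable f μ) (s : ℝ) :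
    ∫ x, (f x - s) ∂μ = μ.real univ * ((⨍ x, f x ∂μ) - s) := by
  rw [integral_sub hf (integrable_const s), ← measure_smul_average, integral_const]
  simp only [smul_eq_mul, mul_sub]

lemma average_abs_sub_average (hf : Integrable f μ) :
    ⨍ x, |f x - ⨍ y, f y ∂μ| ∂μ = 2 * ⨍ x, (f x - ⨍ y, f y ∂μ)⁺ ∂μ := by
  have hsub : Integrable (fun x => f x - ⨍ y, f y ∂μ) μ := hf.sub (integrable_const _)
  rw [average_eq, integral_abs_eq_two_mul_integral_posPart_sub_integral hsub,
    integral_sub_average, sub_zero, smul_eq_mul, mul_left_comm, ← smul_eq_mul (_⁻¹), ← average_eq]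

lemma average_abs_sub_average_le (hf : Integrable f μ) (hf0 : 0 ≤ᵐ[μ] f) :
    ⨍ x, |f x - ⨍ y, f y ∂μ| ∂μ ≤ 2 * ⨍ x, f x ∂μ := by
  rw [average_abs_sub_average hf]
  gcongr
  refine average_mono_of_integrable (integrable_posPart_sub_const hf _) hf ?_
  filter_upwards [hf0] with x hx
  exact sup_le (sub_le_self _ (average_nonneg_of_ae hf0)) hx

lemma average_posPart_sub_le_of_average_le {α : ℝ} (hf : Integrable f μ)
    (hα : ⨍ x, f x ∂μ ≤ α) :
    2 * ⨍ x, (f x - α)⁺ ∂μ ≤ ⨍ x, |f x - ⨍ y, f y ∂μ| ∂μ := by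
  rw [average_abs_sub_average hf]
  gcongr
  exact average_mono_of_integrable (integrable_posPart_sub_const hf _)
    (integrable_posPart_sub_const hf _) (.of_forall fun x => posPart_mono (by gcongr))

lemma mul_measureReal_lt_setIntegral_of_lt_setAverage {C : Set X} {α : ℝ} (hα : 0 ≤ α)
    (hC : α < ⨍ x in C, f x ∂μ) : α * μ.real C < ∫ x in C, f x ∂μ := by
  have hμC : 0 < μ.real C := by
    refine measureReal_nonneg.lt_of_ne' fun h => hC.not_ge ?_
    simpa [setAverage_eq, h] using hα
  rw [← measure_smul_setAverage f (measure_ne_top μ C), smul_eq_mul, mul_comm]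
  gcongr

lemma setIntegral_le_mul_measureReal_of_setAverage_le {C : Set X} {α : ℝ}
    (hC : ⨍ x in C, f x ∂μ ≤ α) : ∫ x in C, f x ∂μ ≤ α * μ.real C := by
  rw [← measure_smul_setAverage f (measure_ne_top μ C), smul_eq_mul, mul_comm]
  gcongr

end MeanOscillation

section Rearrangement

variable {X : Type*} [MeasurableSpace X] {μ : Measure X} {f : X → ℝ} {g : ℝ → ℝ}

lemma identDistrib_of_measure_setOf_lt_eq {Y : Type*} [MeasurableSpace Y] {ν : Measure Y}
    [IsProbabilityMeasure μ] [IsProbabilityMeasure ν] {h : Y → ℝ} (hf : AEMeasurable f μ)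
    (hh : AEMeasurable h ν) (hlt : ∀ a, μ {x | a < f x} = ν {y | a < h y}) :
    IdentDistrib f h μ ν := by
  have := Measure.isProbabilityMeasure_map hf
  have := Measure.isProbabilityMeasure_map hh
  refine ⟨hf, hh, Measure.ext_of_Iic _ _ fun a => ?_⟩
  rw [← compl_Ioi, prob_compl_eq_one_sub measurableSet_Ioi,
    prob_compl_eq_one_sub measurableSet_Ioi, Measure.map_apply_of_aemeasurable hf measurableSet_Ioi,
    Measure.map_apply_of_aemeasurable hh measurableSet_Ioi]
  exact congrArg _ (hlt a)

lemma integral_posPart_sub_eq_of_antitoneOn {a b t : ℝ} (hg : AntitoneOn g (Ioc a b))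
    (ht : t ∈ Ioc a b) :
    ∫ u in Ioc a b, (g u - g t)⁺ = ∫ u in Ioc a t, (g u - g t) := by
  have hsub : Ioc a t ⊆ Ioc a b := Ioc_subset_Ioc_right ht.2
  rw [setIntegral_eq_of_subset_of_forall_sdiff_eq_zero measurableSet_Ioc hsub fun u hu => ?_]
  · exact setIntegral_congr_fun measurableSet_Ioc fun u hu =>
      posPart_eq_self.2 (sub_nonneg.2 (hg (hsub hu) ht hu.2))
  · have htu : t ≤ u := le_of_not_ge fun h => hu.2 ⟨hu.1.1, h⟩
    exact posPart_eq_zero.2 (sub_nonpos.2 (hg ht hu.1 htu))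

lemma integral_posPart_sub_eq_of_identDistrib {Y : Type*} [MeasurableSpace Y] {ν : Measure Y}
    {h : Y → ℝ} (hfh : IdentDistrib f h μ ν) (s : ℝ) :
    ∫ x, (f x - s)⁺ ∂μ = ∫ y, (h y - s)⁺ ∂ν :=
  (hfh.comp (u := fun r : ℝ => max (r - s) 0) (by fun_prop)).integral_eq

-- Subtracting the level `g t` reduces both averages to `∫ (f - g t)⁺ = ∫ (g - g t)⁺`.
lemma setAverage_le_setAverage_Ioc_of_identDistrib [IsFiniteMeasure μ] {T t : ℝ} {E : Set X}
    (hgf : IdentDistrib g f (volume.restrict (Ioc 0 T)) μ) (hg : AntitoneOn g (Ioc 0 T))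
    (hf : Integrable f μ) (ht : t ∈ Ioc 0 T) (hE : t ≤ μ.real E) :
    ⨍ x in E, f x ∂μ ≤ ⨍ u in Ioc 0 t, g u := by
  have hgt : IntegrableOn g (Ioc 0 t) :=
    IntegrableOn.mono_set (hgf.integrable_iff.2 hf) (Ioc_subset_Ioc_right ht.2)
  have hexcess : ∫ x, (f x - g t)⁺ ∂μ = t * ((⨍ u in Ioc 0 t, g u) - g t) := by
    rw [← integral_posPart_sub_eq_of_identDistrib hgf,
      integral_posPart_sub_eq_of_antitoneOn hg ht, integral_sub_const_eq_mul_average_sub hgt]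
    simp [ht.1.le]
  have hlevel : g t ≤ ⨍ u in Ioc 0 t, g u := by
    have : 0 ≤ t * ((⨍ u in Ioc 0 t, g u) - g t) :=
      hexcess ▸ integral_nonneg fun x => posPart_nonneg _
    exact sub_nonneg.1 (nonneg_of_mul_nonneg_right this ht.1)
  have hmul : μ.real E * ((⨍ x in E, f x ∂μ) - g t) ≤ μ.real E * ((⨍ u in Ioc 0 t, g u) - g t) :=
    calc μ.real E * ((⨍ x in E, f x ∂μ) - g t)
        = ∫ x in E, (f x - g t) ∂μ := by
          rw [integral_sub_const_eq_mul_average_sub hf.integrableOn,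
            measureReal_restrict_apply_univ]
      _ ≤ ∫ x in E, (f x - g t)⁺ ∂μ :=
          integral_mono (hf.integrableOn.sub (integrable_const _))
            (integrable_posPart_sub_const hf.integrableOn _) fun x => le_posPart _
      _ ≤ ∫ x, (f x - g t)⁺ ∂μ :=
          setIntegral_le_integral (integrable_posPart_sub_const hf _)
            (.of_forall fun x => posPart_nonneg _)
      _ = t * ((⨍ u in Ioc 0 t, g u) - g t) := hexcess
      _ ≤ μ.real E * ((⨍ u in Ioc 0 t, g u) - g t) :=
          mul_le_mul_of_nonneg_right hE (sub_nonneg.2 hlevel)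
  linarith [le_of_mul_le_mul_left hmul (ht.1.trans_le hE)]

lemma hardyAvg_eq_setAverage (g : ℝ → ℝ) {t : ℝ} (ht : 0 ≤ t) :
    hardyAvg g t = ⨍ u in Ioc 0 t, g u := by
  rw [hardyAvg, setAverage_eq, smul_eq_mul, Real.volume_real_Ioc_of_le ht, sub_zero]

lemma inv_mul_integral_abs_sub_hardyAvg_le {t T : ℝ} (hg : IntegrableOn g (Ioc 0 T))
    (ht : t ∈ Ioc 0 T) :
    t⁻¹ * ∫ u in Ioc 0 t, |g u - hardyAvg g t| ≤
      2 * (t⁻¹ * ∫ u in Ioc 0 T, (g u - hardyAvg g t)⁺) := by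
  have hsub : Ioc 0 t ⊆ Ioc 0 T := Ioc_subset_Ioc_right ht.2
  have hosc := average_abs_sub_average (hg.mono_set hsub)
  simp only [← hardyAvg_eq_setAverage _ ht.1.le] at hosc
  refine hosc.trans_le ?_
  have ht0 : 0 < t := ht.1
  unfold hardyAvg
  gcongr
  · exact .of_forall fun u => posPart_nonneg _
  · exact integrable_posPart_sub_const hg _

end Rearrangement

section UnitCubeRearrangement

variable {n : ℕ} {f : (Fin n → ℝ) → ℝ} {g : ℝ → ℝ} {t : ℝ}

lemma volume_Q0 (n : ℕ) : volume (Q0 n) = 1 := by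
  simp [Q0, Real.volume_Icc_pi]

instance isProbabilityMeasure_restrict_Q0 (n : ℕ) :
    IsProbabilityMeasure (volume.restrict (Q0 n)) :=
  ⟨by rw [Measure.restrict_apply_univ, volume_Q0]⟩

lemma IsRearrangement.congr {f' : (Fin n → ℝ) → ℝ} (hg : IsRearrangement f g)
    (hff' : EqOn f f' (Q0 n)) : IsRearrangement f' g := by
  refine ⟨hg.1, hg.2.1, fun a => (hg.2.2 a).trans (congrArg volume ?_)⟩
  ext x
  exact and_congr_right fun hx => by rw [hff' hx]

lemma IsRearrangement.identDistrib (hg : IsRearrangement f g)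
    (hf : AEMeasurable f (volume.restrict (Q0 n))) :
    IdentDistrib g f (volume.restrict (Ioc 0 1)) (volume.restrict (Q0 n)) := by
  have : IsProbabilityMeasure (volume.restrict (Ioc (0 : ℝ) 1)) := ⟨by simp⟩
  refine identDistrib_of_measure_setOf_lt_eq
    (aemeasurable_restrict_of_antitoneOn measurableSet_Ioc hg.1) hf fun a => ?_
  rw [Measure.restrict_apply' measurableSet_Ioc,
    Measure.restrict_apply' (s := Q0 n) measurableSet_Icc, inter_comm, inter_comm _ (Q0 n)]
  exact hg.2.2 a

lemma IsRearrangement.setAverage_le_hardyAvg {E : Set (Fin n → ℝ)} (hg : IsRearrangement f g)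
    (hf : IntegrableOn f (Q0 n)) (ht : t ∈ Ioc 0 1)
    (hE : t ≤ (volume.restrict (Q0 n)).real E) :
    ⨍ x in E, f x ∂volume.restrict (Q0 n) ≤ hardyAvg g t := by
  rw [hardyAvg_eq_setAverage _ ht.1.le]
  exact setAverage_le_setAverage_Ioc_of_identDistrib (hg.identDistrib hf.aemeasurable) hg.1 hf ht hE

lemma IsRearrangement.hardyAvg_nonneg (hg : IsRearrangement f g) (hf : IntegrableOn f (Q0 n))
    (hf0 : ∀ x ∈ Q0 n, 0 ≤ f x) (ht : t ∈ Ioc 0 1) : 0 ≤ hardyAvg g t := by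
  have havg : 0 ≤ ⨍ x in univ, f x ∂volume.restrict (Q0 n) :=
    average_nonneg_of_ae (ae_restrict_of_ae (ae_restrict_of_forall_mem measurableSet_Icc hf0))
  exact havg.trans (hg.setAverage_le_hardyAvg hf ht (by simpa using ht.2))

end UnitCubeRearrangement

section NestedPartition

variable {X : Type*} {cell : ℕ → X → Set X}

/-- A refining sequence of countable measurable partitions of `X`, encoded by the function sending
`k` and `x` to the piece `cell k x` of the `k`-th partition that contains `x`. It abstracts the
dyadic cubes in the Calderón–Zygmund decomposition. -/
structure IsNestedPartition [MeasurableSpace X] (cell : ℕ → X → Set X) : Prop where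
  mem_cell : ∀ k x, x ∈ cell k x
  cell_eq_of_mem : ∀ {k x y}, y ∈ cell k x → cell k y = cell k x
  antitone_cell : ∀ x, Antitone fun k => cell k x
  measurableSet_cell : ∀ k x, MeasurableSet (cell k x)
  countable_range_cell : ∀ k, (range (cell k)).Countable

/-- The cells satisfying `p` none of whose predecessors in `cell` satisfies `p`, that is, the cells
selected by the stopping time `p`. -/
def stoppingCells (cell : ℕ → X → Set X) (p : Set X → Prop) : Set (Set X) :=
  {P | ∃ k x, cell k x = P ∧ p P ∧ ∀ j < k, ¬ p (cell j x)}

variable [MeasurableSpace X] {p : Set X → Prop} {P : Set X}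

lemma IsNestedPartition.exists_eq_cell_of_mem_stoppingCells (hcell : IsNestedPartition cell)
    (hP : P ∈ stoppingCells cell p) {z : X} (hz : z ∈ P) :
    ∃ k, cell k z = P ∧ p (cell k z) ∧ ∀ j < k, ¬ p (cell j z) := by
  obtain ⟨k, x, rfl, hpk, hmin⟩ := hP
  have hcell_eq : ∀ j ≤ k, cell j z = cell j x := fun j hj =>
    hcell.cell_eq_of_mem (hcell.antitone_cell x hj hz)
  exact ⟨k, hcell_eq k le_rfl, (hcell_eq k le_rfl).symm ▸ hpk, fun j hj =>
    (hcell_eq j hj.le).symm ▸ hmin j hj⟩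

lemma IsNestedPartition.pairwiseDisjoint_stoppingCells (hcell : IsNestedPartition cell) :
    (stoppingCells cell p).PairwiseDisjoint id := by
  refine fun P hP Q hQ hne => disjoint_left.2 fun z hzP hzQ => hne ?_
  obtain ⟨j, rfl, hpj, hminj⟩ := hcell.exists_eq_cell_of_mem_stoppingCells hP hzP
  obtain ⟨k, rfl, hpk, hmink⟩ := hcell.exists_eq_cell_of_mem_stoppingCells hQ hzQ
  rcases lt_trichotomy j k with hjk | rfl | hkj
  · exact absurd hpj (hmink j hjk)
  · rfl
  · exact absurd hpk (hminj k hkj)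

lemma IsNestedPartition.measurableSet_of_mem_stoppingCells (hcell : IsNestedPartition cell)
    (hP : P ∈ stoppingCells cell p) : MeasurableSet P := by
  obtain ⟨k, x, rfl, -⟩ := hP
  exact hcell.measurableSet_cell k x

lemma IsNestedPartition.countable_stoppingCells (hcell : IsNestedPartition cell) :
    (stoppingCells cell p).Countable := by
  refine (countable_iUnion hcell.countable_range_cell).mono ?_
  rintro _ ⟨k, x, rfl, -⟩
  exact mem_iUnion.2 ⟨k, mem_range_self x⟩

lemma IsNestedPartition.mem_sUnion_stoppingCells (hcell : IsNestedPartition cell) {k : ℕ} {x : X}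
    (hp : p (cell k x)) : x ∈ ⋃₀ stoppingCells cell p := by
  classical
  have hex : ∃ k, p (cell k x) := ⟨k, hp⟩
  exact ⟨cell (Nat.find hex) x, ⟨_, x, rfl, Nat.find_spec hex, fun _ => Nat.find_min hex⟩,
    hcell.mem_cell _ x⟩

end NestedPartition

section CalderonZygmund

variable {X : Type*} [MeasurableSpace X] {μ : Measure X} {f φ : X → ℝ}
  {cell : ℕ → X → Set X} {α c K M t : ℝ}

/-- `P` contains a measurable set that occupies at least the fraction `K⁻¹` of `P` and on which the
average of `f` exceeds `α`. As a stopping condition on cells it selects the parents of the cells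
with a large average of `f`: stopping one generation early keeps the averages over the selected
cells at most `α`. -/
def HasHeavySubset (μ : Measure X) (f : X → ℝ) (α K : ℝ) (P : Set X) : Prop :=
  ∃ C ⊆ P, MeasurableSet C ∧ μ.real P ≤ K * μ.real C ∧ α < ⨍ x in C, f x ∂μ

lemma integral_le_mul_of_forall_setIntegral_le {S : Set (Set X)} (hS : S.Countable)
    (hdisj : S.PairwiseDisjoint id) (hmeas : ∀ P ∈ S, MeasurableSet P) (hφ : Integrable φ μ)
    (hφ0 : ∀ᵐ x ∂μ, x ∉ ⋃₀ S → φ x = 0) (hc : 0 ≤ c)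
    (hloc : ∀ P ∈ S, ∫ x in P, φ x ∂μ ≤ c * μ.real P)
    (hpack : ∀ s : Finset (Set X), ↑s ⊆ S → ∑ P ∈ s, μ.real P ≤ M) :
    ∫ x, φ x ∂μ ≤ c * M := by
  have := hS.to_subtype
  have hsum : HasSum (fun P : S => ∫ x in P, φ x ∂μ) (∫ x in ⋃₀ S, φ x ∂μ) := by
    rw [sUnion_eq_iUnion]
    exact hasSum_integral_iUnion (fun P => hmeas P P.2)
      (fun P Q hPQ => hdisj P.2 Q.2 (Subtype.coe_ne_coe.2 hPQ)) hφ.integrableOn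
  rw [← setIntegral_eq_integral_of_ae_compl_eq_zero hφ0]
  refine hasSum_le_of_sum_le hsum fun s => ?_
  calc ∑ P ∈ s, ∫ x in P, φ x ∂μ ≤ ∑ P ∈ s, c * μ.real (P : Set X) :=
        Finset.sum_le_sum fun P _ => hloc P P.2
    _ = c * ∑ P ∈ s.map (Function.Embedding.subtype _), μ.real P := by
        rw [Finset.mul_sum, Finset.sum_map]; rfl
    _ ≤ c * M := by
        gcongr
        exact hpack _ (by simp)

lemma setAverage_le_of_mem_stoppingCells {P : Set X} (hcell : IsNestedPartition cell)
    (hdoubling : ∀ k x, μ.real (cell k x) ≤ K * μ.real (cell (k + 1) x))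
    (hzero : ∀ x, ⨍ y in cell 0 x, f y ∂μ ≤ α)
    (hP : P ∈ stoppingCells cell (HasHeavySubset μ f α K)) : ⨍ x in P, f x ∂μ ≤ α := by
  obtain ⟨_ | k, x, rfl, -, hmin⟩ := hP
  · exact hzero x
  · by_contra! hα
    exact hmin k k.lt_succ_self ⟨cell (k + 1) x, hcell.antitone_cell x k.le_succ,
      hcell.measurableSet_cell _ x, hdoubling k x, hα⟩

lemma mem_sUnion_stoppingCells_of_tendsto {x : X} (hcell : IsNestedPartition cell)
    (hdoubling : ∀ k x, μ.real (cell k x) ≤ K * μ.real (cell (k + 1) x))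
    (hdiff : Tendsto (fun k => ⨍ y in cell k x, f y ∂μ) atTop (𝓝 (f x))) (hx : α < f x) :
    x ∈ ⋃₀ stoppingCells cell (HasHeavySubset μ f α K) := by
  obtain ⟨k, hk⟩ :=
    (((tendsto_add_atTop_iff_nat 1).2 hdiff).eventually_const_lt hx).exists
  exact hcell.mem_sUnion_stoppingCells ⟨cell (k + 1) x, hcell.antitone_cell x k.le_succ,
    hcell.measurableSet_cell _ x, hdoubling k x, hk⟩

variable [IsFiniteMeasure μ]

-- The union of the heavy subsets carries an average above `α`, so its measure is below `t`.
lemma sum_measureReal_le_of_hasHeavySubset {ι : Type*} {s : Finset ι} {P : ι → Set X}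
    (hf : Integrable f μ) (hα : 0 ≤ α) (hK : 0 ≤ K) (ht : 0 ≤ t)
    (hmax : ∀ E, MeasurableSet E → t ≤ μ.real E → ⨍ x in E, f x ∂μ ≤ α)
    (hdisj : (s : Set ι).PairwiseDisjoint P) (hP : ∀ i ∈ s, HasHeavySubset μ f α K (P i)) :
    ∑ i ∈ s, μ.real (P i) ≤ K * t := by
  choose! C hCP hCmeas hCK hCα using hP
  have hCdisj : (s : Set ι).PairwiseDisjoint C := hdisj.mono_on hCP
  have hsum : μ.real (⋃ i ∈ s, C i) = ∑ i ∈ s, μ.real (C i) :=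
    measureReal_biUnion_finset hCdisj hCmeas
  have hsmall : μ.real (⋃ i ∈ s, C i) ≤ t := by
    rcases s.eq_empty_or_nonempty with rfl | hs
    · simpa using ht
    by_contra! hlt
    refine (setIntegral_le_mul_measureReal_of_setAverage_le
      (hmax _ (s.measurableSet_biUnion hCmeas) hlt.le)).not_gt ?_
    rw [hsum, Finset.mul_sum, integral_biUnion_finset s hCmeas hCdisj fun i _ => hf.integrableOn]
    exact Finset.sum_lt_sum_of_nonempty hs fun i hi =>
      mul_measureReal_lt_setIntegral_of_lt_setAverage hα (hCα i hi)
  calc ∑ i ∈ s, μ.real (P i) ≤ ∑ i ∈ s, K * μ.real (C i) := Finset.sum_le_sum hCK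
    _ = K * μ.real (⋃ i ∈ s, C i) := by rw [hsum, Finset.mul_sum]
    _ ≤ K * t := by gcongr

theorem integral_posPart_sub_le_of_isNestedPartition (hcell : IsNestedPartition cell)
    (hf : Integrable f μ) (hα : 0 ≤ α) (hK : 0 ≤ K) (ht : 0 ≤ t) (hc : 0 ≤ c)
    (hdoubling : ∀ k x, μ.real (cell k x) ≤ K * μ.real (cell (k + 1) x))
    (hdiff : ∀ᵐ x ∂μ, Tendsto (fun k => ⨍ y in cell k x, f y ∂μ) atTop (𝓝 (f x)))
    (hzero : ∀ x, ⨍ y in cell 0 x, f y ∂μ ≤ α)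
    (hmax : ∀ E, MeasurableSet E → t ≤ μ.real E → ⨍ x in E, f x ∂μ ≤ α)
    (hloc : ∀ k x, μ.real (cell k x) ≤ K * t → ⨍ y in cell k x, f y ∂μ ≤ α →
      ⨍ y in cell k x, (f y - α)⁺ ∂μ ≤ c) :
    ∫ x, (f x - α)⁺ ∂μ ≤ c * (K * t) := by
  set S := stoppingCells cell (HasHeavySubset μ f α K)
  have hpack : ∀ s : Finset (Set X), ↑s ⊆ S → ∑ P ∈ s, μ.real P ≤ K * t := fun s hs =>
    sum_measureReal_le_of_hasHeavySubset hf hα hK ht hmax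
      (hcell.pairwiseDisjoint_stoppingCells.subset hs) fun P hP => by
        obtain ⟨_, _, -, hheavy, -⟩ := hs hP
        exact hheavy
  refine integral_le_mul_of_forall_setIntegral_le hcell.countable_stoppingCells
    hcell.pairwiseDisjoint_stoppingCells
    (fun P hP => hcell.measurableSet_of_mem_stoppingCells hP)
    (integrable_posPart_sub_const hf α) ?_ hc (fun P hP => ?_) hpack
  · filter_upwards [hdiff] with x hx hxS
    refine posPart_eq_zero.2 (sub_nonpos.2 (le_of_not_gt fun hαx => hxS ?_))
    exact mem_sUnion_stoppingCells_of_tendsto hcell hdoubling hx hαx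
  · have hPα : ⨍ x in P, f x ∂μ ≤ α :=
      setAverage_le_of_mem_stoppingCells hcell hdoubling hzero hP
    have hPt : μ.real P ≤ K * t := by simpa using hpack {P} (by simpa using hP)
    obtain ⟨k, x, rfl, -⟩ := hP
    exact setIntegral_le_mul_measureReal_of_setAverage_le (hloc k x hPt hPα)

end CalderonZygmund

section DyadicBox

open BoxIntegral.unitPartition
open BoxIntegral (Box)

variable {ι : Type*}

lemma index_eq_index_of_index_mul_eq {m d : ℕ} [NeZero d] {x y : ι → ℝ}
    (h : index (m * d) x = index (m * d) y) : index m x = index m y := by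
  have hd : (0 : ℝ) < d := Nat.cast_pos.2 (NeZero.pos d)
  funext i
  have hceil_le : ∀ (w : ι → ℝ) (z : ℤ), ⌈m * w i⌉ ≤ z ↔ ⌈((m * d : ℕ) : ℝ) * w i⌉ ≤ z * d := by
    intro w z
    rw [Int.ceil_le, Int.ceil_le, ← mul_le_mul_iff_of_pos_right hd]
    push_cast
    rw [mul_right_comm]
  have hi : ⌈((m * d : ℕ) : ℝ) * x i⌉ = ⌈((m * d : ℕ) : ℝ) * y i⌉ :=
    sub_left_injective (congrFun h i)
  exact congrArg (· - 1) (eq_of_forall_ge_iff fun z => by rw [hceil_le, hceil_le, hi])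

/-- The half-open dyadic cube `∏ᵢ (mᵢ 2⁻ᵏ, (mᵢ + 1) 2⁻ᵏ]` containing `x`. Half-open cubes of a
given side length partition the space; their closures `Box.Icc` are the cubes of `IsDyadicSide`. -/
def dyadicBox (k : ℕ) (x : ι → ℝ) : Box ι := box (2 ^ k) (index (2 ^ k) x)

lemma mem_dyadicBox_iff {k : ℕ} {x y : ι → ℝ} :
    y ∈ dyadicBox k x ↔ index (2 ^ k) y = index (2 ^ k) x :=
  mem_box_iff_index

lemma mem_dyadicBox_self (k : ℕ) (x : ι → ℝ) : x ∈ dyadicBox k x :=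
  mem_dyadicBox_iff.2 rfl

lemma dyadicBox_eq_of_mem {k : ℕ} {x y : ι → ℝ} (h : y ∈ dyadicBox k x) :
    dyadicBox k y = dyadicBox k x :=
  congrArg (box (2 ^ k)) (mem_dyadicBox_iff.1 h)

lemma antitone_dyadicBox (x : ι → ℝ) : Antitone fun k => dyadicBox k x := by
  refine antitone_nat_of_succ_le fun k y hy => ?_
  rw [mem_dyadicBox_iff] at hy ⊢
  simp only [pow_succ] at hy
  exact index_eq_index_of_index_mul_eq hy

lemma isNestedPartition_dyadicBox [Finite ι] :
    IsNestedPartition fun k (x : ι → ℝ) => (dyadicBox k x : Set (ι → ℝ)) where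
  mem_cell := mem_dyadicBox_self
  cell_eq_of_mem h := congrArg _ (dyadicBox_eq_of_mem h)
  antitone_cell := antitone_dyadicBox
  measurableSet_cell k x := (dyadicBox k x).measurableSet_coe
  countable_range_cell k := (countable_range fun ν : ι → ℤ => (box (2 ^ k) ν : Set (ι → ℝ))).mono
    (range_subset_iff.2 fun x => mem_range_self (index (2 ^ k) x))

lemma measureReal_dyadicBox [Fintype ι] (k : ℕ) (x : ι → ℝ) :
    volume.real (dyadicBox k x : Set (ι → ℝ)) = ((2 ^ k)⁻¹) ^ Fintype.card ι := by
  simp [Measure.real, dyadicBox, volume_box]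

lemma Icc_dyadicBox_eq_closedBall [Fintype ι] (k : ℕ) (x : ι → ℝ) :
    Box.Icc (dyadicBox k x) =
      Metric.closedBall (midpoint ℝ (dyadicBox k x).lower (dyadicBox k x).upper)
        ((2 ^ k)⁻¹ / 2) := by
  rw [closedBall_pi _ (by positivity), Box.Icc_eq_pi]
  refine congrArg _ (funext fun i => ?_)
  have hside : (dyadicBox k x).upper i - (dyadicBox k x).lower i = (2 ^ k)⁻¹ := by
    rw [dyadicBox, box.upper_sub_lower, Nat.cast_pow, Nat.cast_ofNat, one_div]
  rw [Real.Icc_eq_closedBall, hside]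
  simp [midpoint_eq_smul_add, div_eq_inv_mul]

lemma ae_tendsto_setAverage_dyadicBox [Fintype ι] {g : (ι → ℝ) → ℝ} (hg : LocallyIntegrable g) :
    ∀ᵐ x, Tendsto (fun k => ⨍ y in dyadicBox k x, g y) atTop (𝓝 (g x)) := by
  filter_upwards [IsUnifLocDoublingMeasure.ae_tendsto_average volume hg 1] with x hx
  simp only [setAverage_congr (Box.coe_ae_eq_Icc _), Icc_dyadicBox_eq_closedBall]
  refine hx _ _ (tendsto_nhdsWithin_iff.2 ⟨?_, .of_forall fun k => ?_⟩) (.of_forall fun k => ?_)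
  · have hlim : Tendsto (fun k : ℕ => ((2⁻¹ : ℝ) ^ k) / 2) atTop (𝓝 (0 / 2)) :=
      (tendsto_pow_atTop_nhds_zero_of_lt_one (by norm_num) (by norm_num)).div_const 2
    simpa only [inv_pow, zero_div] using hlim
  · rw [mem_Ioi]
    positivity
  · rw [one_mul, ← Icc_dyadicBox_eq_closedBall]
    exact Box.coe_subset_Icc (mem_dyadicBox_self k x)

/-- The half-open unit cube `∏ᵢ (0, 1]`, whose closure is `Q0`. -/
def unitBox (ι : Type*) : Box ι := ⟨0, 1, fun _ => zero_lt_one⟩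

lemma dyadicBox_zero_of_mem_unitBox {x : ι → ℝ} (hx : x ∈ unitBox ι) :
    dyadicBox 0 x = unitBox ι := by
  have hbox : box (2 ^ 0) (0 : ι → ℤ) = unitBox ι := by
    ext y
    simp [unitBox]
  have hindex : index (2 ^ 0) x = 0 := mem_box_iff_index.1 (hbox ▸ hx)
  rw [dyadicBox, hindex, hbox]

lemma dyadicBox_le_unitBox {x : ι → ℝ} (hx : x ∈ unitBox ι) (k : ℕ) : dyadicBox k x ≤ unitBox ι :=
  (antitone_dyadicBox x k.zero_le).trans_eq (dyadicBox_zero_of_mem_unitBox hx)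

variable {n : ℕ}

lemma isDyadicSide_Icc_dyadicBox {x : Fin n → ℝ} (hx : x ∈ unitBox (Fin n)) (k : ℕ) :
    IsDyadicSide n k (Box.Icc (dyadicBox k x)) := by
  have hle := Box.le_iff_bounds.1 (dyadicBox_le_unitBox hx k)
  have hnonneg : ∀ i, 0 ≤ index (2 ^ k) x i := fun i => by
    have h : (0 : ℝ) ≤ index (2 ^ k) x i / (2 ^ k : ℕ) := hle.1 i
    rw [le_div_iff₀ (by positivity), zero_mul] at h
    exact_mod_cast h
  have hlt : ∀ i, index (2 ^ k) x i < 2 ^ k := fun i => by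
    have h : (index (2 ^ k) x i + 1 : ℝ) / (2 ^ k : ℕ) ≤ 1 := hle.2 i
    rw [div_le_one (by positivity)] at h
    exact_mod_cast h
  lift index (2 ^ k) x to Fin n → ℕ using hnonneg with m hm
  refine ⟨m, fun i => by exact_mod_cast hlt i, ?_⟩
  simp [dyadicBox, ← hm, Box.Icc_def]

lemma unitBox_ae_eq_Q0 : (unitBox (Fin n) : Set (Fin n → ℝ)) =ᵐ[volume] Q0 n :=
  Box.coe_ae_eq_Icc (unitBox (Fin n))

lemma dyadicBox_subset_Q0 {x : Fin n → ℝ} (hx : x ∈ unitBox (Fin n)) (k : ℕ) :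
    (dyadicBox k x : Set (Fin n → ℝ)) ⊆ Q0 n :=
  (Box.coe_subset_coe.2 (dyadicBox_le_unitBox hx k)).trans Box.coe_subset_Icc

lemma restrict_Q0_restrict_dyadicBox {x : Fin n → ℝ} (hx : x ∈ unitBox (Fin n)) (k : ℕ) :
    (volume.restrict (Q0 n)).restrict (dyadicBox k x : Set (Fin n → ℝ)) =
      volume.restrict (dyadicBox k x : Set (Fin n → ℝ)) :=
  Measure.restrict_restrict_of_subset (dyadicBox_subset_Q0 hx k)

lemma restrict_Q0_restrict_dyadicBox_of_notMem {x : Fin n → ℝ} (hx : x ∉ unitBox (Fin n)) (k : ℕ) :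
    (volume.restrict (Q0 n)).restrict (dyadicBox k x : Set (Fin n → ℝ)) = 0 := by
  have hdisj : Disjoint (dyadicBox k x : Set (Fin n → ℝ)) (unitBox (Fin n)) :=
    disjoint_left.2 fun y hyx hy => hx <| dyadicBox_le_unitBox hy k <|
      (dyadicBox_eq_of_mem hyx).symm ▸ mem_dyadicBox_self k x
  rw [Measure.restrict_eq_zero, ← Measure.restrict_congr_set unitBox_ae_eq_Q0,
    Measure.restrict_apply (Box.measurableSet_coe _), hdisj.inter_eq, measure_empty]

lemma measureReal_restrict_Q0_dyadicBox {x : Fin n → ℝ} (hx : x ∈ unitBox (Fin n)) (k : ℕ) :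
    (volume.restrict (Q0 n)).real (dyadicBox k x : Set (Fin n → ℝ)) = ((2 ^ k)⁻¹) ^ n := by
  rw [← measureReal_restrict_apply_univ, restrict_Q0_restrict_dyadicBox hx,
    measureReal_restrict_apply_univ, measureReal_dyadicBox, Fintype.card_fin]

lemma measureReal_restrict_Q0_dyadicBox_le (k : ℕ) (x : Fin n → ℝ) :
    (volume.restrict (Q0 n)).real (dyadicBox k x : Set (Fin n → ℝ)) ≤
      2 ^ n * (volume.restrict (Q0 n)).real (dyadicBox (k + 1) x : Set (Fin n → ℝ)) := by
  by_cases hx : x ∈ unitBox (Fin n)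
  · rw [measureReal_restrict_Q0_dyadicBox hx, measureReal_restrict_Q0_dyadicBox hx, ← mul_pow,
      pow_succ', mul_inv, mul_inv_cancel_left₀ two_ne_zero]
  · rw [← measureReal_restrict_apply_univ, restrict_Q0_restrict_dyadicBox_of_notMem hx]
    simp only [measureReal_zero_apply]
    positivity

variable {f : (Fin n → ℝ) → ℝ}

lemma ae_restrict_Q0_tendsto_setAverage_dyadicBox (hf : IntegrableOn f (Q0 n)) :
    ∀ᵐ x ∂volume.restrict (Q0 n),
      Tendsto (fun k => ⨍ y in dyadicBox k x, f y ∂volume.restrict (Q0 n)) atTop (𝓝 (f x)) := by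
  have hind : LocallyIntegrable ((Q0 n).indicator f) :=
    (hf.integrable_indicator measurableSet_Icc).locallyIntegrable
  have hunit : ∀ᵐ x ∂volume.restrict (Q0 n), x ∈ unitBox (Fin n) := by
    rw [← Measure.restrict_congr_set unitBox_ae_eq_Q0]
    exact ae_restrict_mem (Box.measurableSet_coe _)
  filter_upwards [ae_restrict_of_ae (ae_tendsto_setAverage_dyadicBox hind), hunit] with x hlim hx
  have heqOn : ∀ k, EqOn ((Q0 n).indicator f) f (dyadicBox k x) := fun k y hy =>
    indicator_of_mem (dyadicBox_subset_Q0 hx k hy) f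
  rw [heqOn 0 (mem_dyadicBox_self 0 x)] at hlim
  refine hlim.congr fun k => ?_
  rw [restrict_Q0_restrict_dyadicBox hx]
  exact setAverage_congr_fun (Box.measurableSet_coe _) (.of_forall fun y => @heqOn k y)

theorem integral_Q0_posPart_sub_le {α c t : ℝ} (hf : IntegrableOn f (Q0 n)) (hα : 0 ≤ α)
    (hc : 0 ≤ c) (ht : t ∈ Ioc 0 1)
    (hmax : ∀ E, t ≤ (volume.restrict (Q0 n)).real E → ⨍ x in E, f x ∂volume.restrict (Q0 n) ≤ α)
    (hloc : ∀ k Q, IsDyadicSide n k Q → ((2 ^ k)⁻¹) ^ n ≤ 2 ^ n * t → ⨍ x in Q, f x ≤ α →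
      ⨍ x in Q, (f x - α)⁺ ≤ c) :
    ∫ x in Q0 n, (f x - α)⁺ ≤ c * (2 ^ n * t) := by
  refine integral_posPart_sub_le_of_isNestedPartition isNestedPartition_dyadicBox hf hα
    (by positivity) ht.1.le hc measureReal_restrict_Q0_dyadicBox_le
    (ae_restrict_Q0_tendsto_setAverage_dyadicBox hf) (fun x => ?_) (fun E _ => hmax E)
    fun k x => ?_
  all_goals by_cases hx : x ∈ unitBox (Fin n)
  · refine hmax _ ?_
    simpa [measureReal_restrict_Q0_dyadicBox hx] using ht.2
  · simpa [restrict_Q0_restrict_dyadicBox_of_notMem hx] using hα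
  · rw [measureReal_restrict_Q0_dyadicBox hx, restrict_Q0_restrict_dyadicBox hx,
      Measure.restrict_congr_set (Box.coe_ae_eq_Icc _)]
    exact hloc k _ (isDyadicSide_Icc_dyadicBox hx k)
  · simpa [restrict_Q0_restrict_dyadicBox_of_notMem hx] using fun _ _ => hc

end DyadicBox

section GurovReshetnyak

variable {n : ℕ} {f : (Fin n → ℝ) → ℝ} {σ : ℝ} {k : ℕ} {Q : Set (Fin n → ℝ)}

lemma avgOn_eq_setAverage (f : (Fin n → ℝ) → ℝ) (Q : Set (Fin n → ℝ)) :
    avgOn f Q = ⨍ x in Q, f x := by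
  rw [avgOn, setAverage_eq, smul_eq_mul, Measure.real]

lemma oscOn_eq_setAverage (f : (Fin n → ℝ) → ℝ) (Q : Set (Fin n → ℝ)) :
    oscOn f Q = ⨍ x in Q, |f x - ⨍ y in Q, f y| := by
  rw [oscOn, setAverage_eq, smul_eq_mul, Measure.real, avgOn_eq_setAverage]

lemma IsDyadicSide.subset_Q0 (hQ : IsDyadicSide n k Q) : Q ⊆ Q0 n := by
  obtain ⟨m, hm, rfl⟩ := hQ
  refine Icc_subset_Icc (fun i => ?_) (fun i => ?_)
  · exact div_nonneg (Nat.cast_nonneg _) (by positivity)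
  · rw [Pi.one_apply, div_le_one (by positivity)]
    exact_mod_cast hm i

lemma IsDyadicSide.measurableSet (hQ : IsDyadicSide n k Q) : MeasurableSet Q := by
  obtain ⟨m, -, rfl⟩ := hQ
  exact measurableSet_Icc

lemma IsDyadicSide.isFiniteMeasure_restrict (hQ : IsDyadicSide n k Q) :
    IsFiniteMeasure (volume.restrict Q) :=
  MeasureTheory.isFiniteMeasure_restrict.2 <|
    measure_ne_top_of_subset hQ.subset_Q0 (by rw [volume_Q0]; exact ENNReal.one_ne_top)

lemma oscOn_nonneg (f : (Fin n → ℝ) → ℝ) (Q : Set (Fin n → ℝ)) : 0 ≤ oscOn f Q :=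
  mul_nonneg (by positivity) (integral_nonneg fun _ => abs_nonneg _)

lemma vGR_nonneg (f : (Fin n → ℝ) → ℝ) (σ : ℝ) : 0 ≤ vGR f σ :=
  Real.sSup_nonneg fun _ ⟨_, Q, _, _, havg, hr⟩ => hr ▸ div_nonneg (oscOn_nonneg f Q) havg.le

lemma IsDyadicSide.ae_nonneg (hQ : IsDyadicSide n k Q) (hf0 : ∀ x ∈ Q0 n, 0 ≤ f x) :
    0 ≤ᵐ[volume.restrict Q] f :=
  ae_restrict_of_forall_mem hQ.measurableSet fun x hx => hf0 x (hQ.subset_Q0 hx)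

lemma oscOn_le_two_mul_avgOn (hf : IntegrableOn f (Q0 n)) (hf0 : ∀ x ∈ Q0 n, 0 ≤ f x)
    (hQ : IsDyadicSide n k Q) : oscOn f Q ≤ 2 * avgOn f Q := by
  have := hQ.isFiniteMeasure_restrict
  rw [oscOn_eq_setAverage, avgOn_eq_setAverage]
  exact average_abs_sub_average_le (hf.mono_set hQ.subset_Q0) (hQ.ae_nonneg hf0)

lemma oscOn_le_vGR_mul_avgOn (hf : IntegrableOn f (Q0 n)) (hf0 : ∀ x ∈ Q0 n, 0 ≤ f x)
    (hQ : IsDyadicSide n k Q) (hkσ : ((2 : ℝ) ^ k)⁻¹ ≤ σ) :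
    oscOn f Q ≤ vGR f σ * avgOn f Q := by
  have hbdd : BddAbove {r : ℝ | ∃ k Q, IsDyadicSide n k Q ∧ ((2 : ℝ) ^ k)⁻¹ ≤ σ ∧
      0 < avgOn f Q ∧ r = oscOn f Q / avgOn f Q} := by
    refine ⟨2, ?_⟩
    rintro _ ⟨j, R, hR, -, havg, rfl⟩
    exact (div_le_iff₀ havg).2 (oscOn_le_two_mul_avgOn hf hf0 hR)
  have havg : 0 ≤ avgOn f Q := by
    rw [avgOn_eq_setAverage]
    exact average_nonneg_of_ae (hQ.ae_nonneg hf0)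
  rcases havg.eq_or_lt' with hzero | hpos
  · simpa [hzero] using oscOn_le_two_mul_avgOn hf hf0 hQ
  · exact (div_le_iff₀ hpos).1 (le_csSup hbdd ⟨k, Q, hQ, hkσ, hpos, rfl⟩)

lemma setAverage_posPart_sub_le_of_isDyadicSide {α : ℝ} (hf : IntegrableOn f (Q0 n))
    (hf0 : ∀ x ∈ Q0 n, 0 ≤ f x) (hQ : IsDyadicSide n k Q)
    (hkσ : ((2 : ℝ) ^ k)⁻¹ ≤ σ) (hα : ⨍ x in Q, f x ≤ α) :
    ⨍ x in Q, (f x - α)⁺ ≤ vGR f σ * α / 2 := by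
  have := hQ.isFiniteMeasure_restrict
  rw [le_div_iff₀' two_pos]
  calc 2 * ⨍ x in Q, (f x - α)⁺ ≤ oscOn f Q := by
        rw [oscOn_eq_setAverage]
        exact average_posPart_sub_le_of_average_le (hf.mono_set hQ.subset_Q0) hα
    _ ≤ vGR f σ * avgOn f Q := oscOn_le_vGR_mul_avgOn hf hf0 hQ hkσ
    _ ≤ vGR f σ * α := by
        rw [avgOn_eq_setAverage]
        gcongr
        exact vGR_nonneg f σ

end GurovReshetnyak

lemma inv_two_pow_le_of_pow_le {n k : ℕ} (hn : n ≠ 0) {t : ℝ} (ht : 0 ≤ t)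
    (h : (((2 : ℝ) ^ k)⁻¹) ^ n ≤ 2 ^ n * t) :
    ((2 : ℝ) ^ k)⁻¹ ≤ min (2 * t ^ (n : ℝ)⁻¹) 1 := by
  refine le_min (le_of_pow_le_pow_left₀ hn (by positivity) ?_)
    (inv_le_one_of_one_le₀ (one_le_pow₀ one_le_two))
  rwa [mul_pow, Real.rpow_inv_natCast_pow ht hn]

/-- **Theorem 3.** For integrable `f : [0,1]ⁿ → [0,∞)` and every `t ∈ (0,1]`,
`(1/t) ∫_0^t |f*(u) − f**(t)| du ≤ 2ⁿ · v(f;σ_t) · f**(t)` where `σ_t = min(2 t^{1/n}, 1)`. -/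
theorem rearrangement_oscillation_bound (n : ℕ) (hn : 1 ≤ n)
    (f : (Fin n → ℝ) → ℝ) (hf : IntegrableOn f (Q0 n)) (hpos : ∀ x ∈ Q0 n, 0 ≤ f x)
    (fstar : ℝ → ℝ) (hfs : IsRearrangement (fun x => |f x|) fstar) :
    ∀ t ∈ Set.Ioc (0:ℝ) 1,
      t⁻¹ * ∫ u in Set.Ioc (0:ℝ) t, |fstar u - hardyAvg fstar t| ≤
        2 ^ n * vGR f (min (2 * t ^ ((n : ℝ))⁻¹) 1) * hardyAvg fstar t := by
  intro t ht
  set α := hardyAvg fstar t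
  set v := vGR f (min (2 * t ^ (n : ℝ)⁻¹) 1)
  have hfstar : IsRearrangement f fstar := hfs.congr fun x hx => abs_of_nonneg (hpos x hx)
  have hident := hfstar.identDistrib hf.aemeasurable
  have hα : 0 ≤ α := hfstar.hardyAvg_nonneg hf hpos ht
  have hCZ : ∫ x in Q0 n, (f x - α)⁺ ≤ v * α / 2 * (2 ^ n * t) :=
    integral_Q0_posPart_sub_le hf hα (div_nonneg (mul_nonneg (vGR_nonneg _ _) hα) two_pos.le) ht
      (fun E hE => hfstar.setAverage_le_hardyAvg hf ht hE)
      fun k Q hQ hk => setAverage_posPart_sub_le_of_isDyadicSide hf hpos hQ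
        (inv_two_pow_le_of_pow_le (Nat.one_le_iff_ne_zero.1 hn) ht.1.le hk)
  have ht0 : 0 < t := ht.1
  calc t⁻¹ * ∫ u in Ioc 0 t, |fstar u - α|
      ≤ 2 * (t⁻¹ * ∫ u in Ioc 0 1, (fstar u - α)⁺) :=
        inv_mul_integral_abs_sub_hardyAvg_le (hident.integrable_iff.2 hf) ht
    _ = 2 * (t⁻¹ * ∫ x in Q0 n, (f x - α)⁺) := by
        rw [integral_posPart_sub_eq_of_identDistrib hident]
    _ ≤ 2 * (t⁻¹ * (v * α / 2 * (2 ^ n * t))) := by gcongr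
    _ = 2 ^ n * v * α := by field_simp
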